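/- For every β ∈ (0, 1/2) there exist constants C' > 0 and t₀ ∈ (0, 1] such that for all t ∈ (0, t₀], ν_t({x ∈ ℝ : t^β/2 < |x| ≤ 2 t^β}) ≤ C' · t^{1 − αβ}. (This is the probability bound for increments of the small-jump component lying near the threshold, used in Lemma 4.9 of the paper.) -/

import Mathlib

open MeasureTheory

lemma aux_shell (μ : Measure ℝ) (hμ_mom : Integrable (fun x : ℝ => x ^ 2) μ)
    (B v h : ℝ) (hh : 0 < h) 
    (hB : ∫ x in Set.Icc (-v) v, x ^ 2 ∂μ ≤ B) :
    μ {x : ℝ | h < |x| ∧ |x| ≤ v} ≤ ENNReal.ofReal (B / h ^ 2) := by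
  have h1 : ENNReal.ofReal (h ^ 2) * (μ.restrict (Set.Icc (-v) v)) {x : ℝ | ENNReal.ofReal (h ^ 2) ≤ ENNReal.ofReal (x ^ 2)}
      ≤ ENNReal.ofReal B := by
    refine (mul_meas_ge_le_lintegral₀ (by fun_prop) _).trans ?_
    rw [← ofReal_integral_eq_lintegral_ofReal hμ_mom.integrableOn
      (Filter.Eventually.of_forall fun x => sq_nonneg x)]
    exact ENNReal.ofReal_le_ofReal hB
  have hm : MeasurableSet {x : ℝ | ENNReal.ofReal (h ^ 2) ≤ ENNReal.ofReal (x ^ 2)} :=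
    measurableSet_le (by fun_prop) (by fun_prop)
  have h2 : μ {x : ℝ | h < |x| ∧ |x| ≤ v} ≤
      (μ.restrict (Set.Icc (-v) v)) {x : ℝ | ENNReal.ofReal (h ^ 2) ≤ ENNReal.ofReal (x ^ 2)} := by
    rw [Measure.restrict_apply hm]
    refine measure_mono ?_
    rintro x ⟨hx1, hx2⟩
    refine ⟨ENNReal.ofReal_le_ofReal ?_, abs_le.mp hx2⟩
    rw [← sq_abs x]
    gcongr
  rw [ENNReal.ofReal_div_of_pos (by positivity)]
  rw [ENNReal.le_div_iff_mul_le (Or.inl (by simpa using hh.ne')) (Or.inl (by simp)), mul_comm]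
  exact (mul_le_mul_right h2 _).trans h1

lemma aux_tail (μ : Measure ℝ)
    (hμ_supp : μ (Set.Icc (-1 : ℝ) 1)ᶜ = 0)
    (hμ_mom : Integrable (fun x : ℝ => x ^ 2) μ)
    (α C : ℝ) (hα : α ∈ Set.Ioo (0 : ℝ) 2) (hC : 0 < C)
    (hμ_small : ∀ v ∈ Set.Ioc (0 : ℝ) 1,
      ∫ x in Set.Icc (-v) v, x ^ 2 ∂μ ≤ C * v ^ (2 - α)) :
    ∃ K > 0, ∀ h > 0, μ {x : ℝ | h < |x|} ≤ ENNReal.ofReal (K * h ^ (-α)) := by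
  obtain ⟨hα0, hα2⟩ := hα
  set q : ℝ := 2 ^ (-α) with hq
  have hq0 : 0 < q := by positivity
  have hq1 : q < 1 := Real.rpow_lt_one_of_one_lt_of_neg (by norm_num) (by linarith)
  have h1q : 0 < 1 - q := by linarith
  set K := 4 * C * q / (1 - q) with hK
  have hK0 : 0 < K := by positivity
  have hKq : K * q + 4 * C * q = K := by rw [hK]; field_simp; ring
  refine ⟨K, hK0, ?_⟩
  have big : ∀ h : ℝ, 1 ≤ h → μ {x : ℝ | h < |x|} = 0 := by
    intro h hh
    refine measure_mono_null ?_ hμ_supp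
    intro x hx hx'
    have := abs_le.mpr hx'
    have : h < |x| := hx
    linarith
  have key : ∀ n : ℕ, ∀ h : ℝ, (1/2 : ℝ) ^ n ≤ h → μ {x : ℝ | h < |x|} ≤ ENNReal.ofReal (K * h ^ (-α)) := by
    intro n
    induction n with
    | zero => intro h hh; rw [big h (by simpa using hh)]; exact zero_le
    | succ n ih =>
      intro h hh
      have hh0 : 0 < h := lt_of_lt_of_le (by positivity) hh
      have i := ih (2 * h) (by rw [pow_succ] at hh; linarith)
      rcases le_or_gt 1 h with h1 | h1
      · rw [big h h1]; exact zero_le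
      set v := min (2 * h) 1 with hv
      have hv0 : 0 < v := by positivity
      have s := aux_shell μ hμ_mom (C * v ^ (2 - α)) v h hh0 (hμ_small v ⟨hv0, min_le_right _ _⟩)
      have sub : {x : ℝ | h < |x|} ⊆ ({x : ℝ | 2 * h < |x|} ∪ {x : ℝ | h < |x| ∧ |x| ≤ v}) ∪ (Set.Icc (-1 : ℝ) 1)ᶜ := by
        intro x hx
        by_cases h3 : x ∈ Set.Icc (-1 : ℝ) 1
        · left
          by_cases h2 : 2 * h < |x|
          · left; exact h2
          · right; exact ⟨hx, le_min (not_lt.mp h2) (abs_le.mpr h3)⟩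
        · right; exact h3
      refine (measure_mono sub).trans ((measure_union_le _ _).trans ?_)
      rw [hμ_supp, add_zero]
      refine (measure_union_le _ _).trans ((add_le_add i s).trans ?_)
      rw [← ENNReal.ofReal_add (by positivity) (by positivity)]
      refine ENNReal.ofReal_le_ofReal ?_
      have e1 : (2 * h) ^ (-α) = q * h ^ (-α) := by
        rw [Real.mul_rpow (by norm_num) hh0.le]
      have e2 : v ^ (2 - α) ≤ 4 * h ^ 2 * (q * h ^ (-α)) := by
        calc v ^ (2 - α) ≤ (2 * h) ^ (2 - α) :=
              Real.rpow_le_rpow hv0.le (min_le_left _ _) (by linarith)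
          _ = (2 * h) ^ 2 * (2 * h) ^ (-α) := by
              rw [sub_eq_add_neg, Real.rpow_add (by positivity)]; norm_num
          _ = _ := by rw [e1]; ring
      have e3 : C * v ^ (2 - α) / h ^ 2 ≤ 4 * C * q * h ^ (-α) := by
        rw [div_le_iff₀ (by positivity)]
        have := mul_le_mul_of_nonneg_left e2 hC.le
        linarith
      rw [e1]
      have : K * h ^ (-α) = (K * q + 4 * C * q) * h ^ (-α) := by rw [hKq]
      linarith
  intro h hh
  obtain ⟨n, hn⟩ := exists_pow_lt_of_lt_one hh (show (1/2:ℝ) < 1 by norm_num)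
  exact key n h hn.le

lemma aux_mom (μ : Measure ℝ)
    (hμ_supp : μ (Set.Icc (-1 : ℝ) 1)ᶜ = 0) (α K p : ℝ) (hK : 0 < K) (hp : 0 < p) (hpα : α < p)
    (ht : ∀ h > 0, μ {x : ℝ | h < |x|} ≤ ENNReal.ofReal (K * h ^ (-α))) :
    Integrable (fun x : ℝ => |x| ^ p) μ := by
  refine ⟨(by fun_prop (disch := linarith) : Measurable fun x : ℝ => |x| ^ p).aestronglyMeasurable, ?_⟩
  rw [hasFiniteIntegral_iff_ofReal (Filter.Eventually.of_forall fun x => by positivity)]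
  rw [lintegral_rpow_eq_lintegral_meas_lt_mul μ
    (Filter.Eventually.of_forall fun x => abs_nonneg x) (by fun_prop) hp]
  refine ENNReal.mul_lt_top ENNReal.ofReal_lt_top ?_
  have hint : IntegrableOn (fun s : ℝ => K * s ^ (p - α - 1)) (Set.Ioc 0 1) := by
    rw [← intervalIntegrable_iff_integrableOn_Ioc_of_le zero_le_one]
    exact (intervalIntegral.intervalIntegrable_rpow' (by linarith)).const_mul K
  calc _ ≤ ∫⁻ s in Set.Ioi 0, (Set.Ioc (0:ℝ) 1).indicator (fun s => ENNReal.ofReal (K * s ^ (p - α - 1))) s := by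
        refine setLIntegral_mono' measurableSet_Ioi ?_
        intro s hs
        have hs : 0 < s := hs
        by_cases h1 : s ≤ 1
        · rw [Set.indicator_of_mem (show s ∈ Set.Ioc (0:ℝ) 1 from ⟨hs, h1⟩)]
          refine (mul_le_mul_left (ht s hs) _).trans ?_
          rw [← ENNReal.ofReal_mul (by positivity), mul_assoc, ← Real.rpow_add hs]
          apply le_of_eq; congr 3; ring
        · have : μ {x : ℝ | s < |x|} = 0 := by
            refine measure_mono_null ?_ hμ_supp
            intro x hx hx'
            have := abs_le.mpr hx'
            have : s < |x| := hx
            linarith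
          rw [this]; simp
    _ ≤ ∫⁻ s, (Set.Ioc (0:ℝ) 1).indicator (fun s => ENNReal.ofReal (K * s ^ (p - α - 1))) s :=
        setLIntegral_le_lintegral _ _
    _ = ∫⁻ s in Set.Ioc (0:ℝ) 1, ENNReal.ofReal (K * s ^ (p - α - 1)) :=
        lintegral_indicator measurableSet_Ioc _
    _ < ⊤ := hint.lintegral_lt_top

lemma aux_sin (y q : ℝ) (h1 : 1 ≤ q) (h2 : q ≤ 2) : |Real.sin y - y| ≤ 2 * |y| ^ q := by
  rcases le_or_gt |y| 1 with h | h
  · have a := Real.abs_sub_sin_le y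
    rw [abs_sub_comm] at a
    rcases (abs_nonneg y).eq_or_lt with h0 | h0
    · have : y = 0 := abs_eq_zero.mp h0.symm
      subst this; simp; positivity
    have b : |y| ^ (3:ℝ) ≤ |y| ^ q := Real.rpow_le_rpow_of_exponent_ge h0 h (by linarith)
    have c : |y| ^ (3:ℝ) = |y| ^ (3:ℕ) := by norm_cast
    rw [c] at b
    have d : 0 ≤ |y| ^ (3:ℕ) := by positivity
    have e : 0 ≤ |y| ^ q := by positivity
    linarith
  · have a : |Real.sin y - y| ≤ |Real.sin y| + |y| := abs_sub _ _
    have b := Real.abs_sin_le_abs (x := y)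
    have c : |y| ^ (1:ℝ) ≤ |y| ^ q := Real.rpow_le_rpow_of_exponent_le h.le h1
    rw [Real.rpow_one] at c
    linarith

lemma aux_trunc (ν : Measure ℝ) [IsProbabilityMeasure ν] (r B : ℝ) (hr : 0 < r)
    (hB : ∀ u : ℝ, |u| ≤ 2 * r⁻¹ → 1 - (charFun ν u).re ≤ B) :
    ν.real {x | r < |x|} ≤ 2 * B := by
  refine (measureReal_abs_gt_le_integral_charFun hr).trans ?_
  set R := 2 * r⁻¹ with hR
  have hR0 : 0 < R := by positivity
  have hneg : -2 * r⁻¹ = -R := by rw [hR]; ring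
  rw [hneg]
  set J := ∫ u in (-R)..R, 1 - charFun ν u with hJ
  have hcont : Continuous (fun u => 1 - charFun ν u) := by fun_prop
  have hint : IntervalIntegrable (fun u => 1 - charFun ν u) volume (-R) R :=
    hcont.intervalIntegrable _ _
  have him : (starRingEnd ℂ) J = J := by
    rw [hJ, ← intervalIntegral.intervalIntegral_conj]
    have h := intervalIntegral.integral_comp_neg (fun u => 1 - charFun ν u) (a := -R) (b := R)
    rw [neg_neg] at h
    rw [← h]
    simp [charFun_neg]
  have hre : J.re = ∫ u in (-R)..R, (1 - (charFun ν u).re) := by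
    have := Complex.reCLM.intervalIntegral_comp_comm hint
    simpa using this.symm
  have hJre : J = (J.re : ℂ) := (Complex.conj_eq_iff_re.mp him).symm
  have hJn : ‖J‖ = |J.re| := by rw [hJre]; simp
  rw [hJn, hre, ← Real.norm_eq_abs]
  have : ‖∫ u in (-R)..R, (1 - (charFun ν u).re)‖ ≤ B * |R - -R| := by
    refine intervalIntegral.norm_integral_le_of_norm_le_const ?_
    intro u hu
    rw [Set.uIoc_of_le (by linarith)] at hu
    have n1 : (charFun ν u).re ≤ 1 := (Complex.re_le_norm _).trans (norm_charFun_le_one u)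
    rw [Real.norm_eq_abs, abs_of_nonneg (by linarith)]
    exact hB u (abs_le.mpr ⟨hu.1.le, hu.2⟩)
  rw [abs_of_pos (by linarith)] at this
  calc _ ≤ 2⁻¹ * r * (B * (R - -R)) := by gcongr
    _ = 2 * B := by rw [hR]; field_simp; ring

lemma aux_exp (z : ℂ) (a b : ℝ) (h0 : z.re ≤ 0) (ha : -z.re ≤ a) (hb : |z.im| ≤ b) :
    1 - (Complex.exp z).re ≤ a + b ^ 2 / 2 := by
  rw [Complex.exp_re]
  have h1 := Real.add_one_le_exp z.re
  have h2 := Real.one_sub_sq_div_two_le_cos (x := z.im)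
  have h3 : Real.exp z.re ≤ 1 := Real.exp_le_one_iff.mpr h0
  have h4 := Real.cos_le_one z.im
  have h5 := Real.exp_pos z.re
  have h6 : z.im ^ 2 ≤ b ^ 2 := by rw [← sq_abs z.im]; gcongr
  nlinarith

lemma aux_psi (μ : Measure ℝ) (hμ_mom : Integrable (fun x : ℝ => x ^ 2) μ) (p h A D u : ℝ)
    (hp1 : 1 ≤ p) (hp2 : p ≤ 2) (hpi : Integrable (fun x : ℝ => |x| ^ p) μ) (hh : 0 < h) (hu : |u| ≤ 4 / h)
    (hA : ∫ x in Set.Icc (-h) h, x ^ 2 ∂μ ≤ A) (hD : 0 ≤ D) (ht : μ {x : ℝ | h < |x|} ≤ ENNReal.ofReal D) :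
    (∫ x : ℝ, (Complex.exp (Complex.I * (u : ℂ) * (x : ℂ)) - 1
            - Complex.I * (u : ℂ) * (x : ℂ)) ∂μ).re ≤ 0 ∧
    -(∫ x : ℝ, (Complex.exp (Complex.I * (u : ℂ) * (x : ℂ)) - 1
            - Complex.I * (u : ℂ) * (x : ℂ)) ∂μ).re ≤ 8 / h ^ 2 * A + 2 * D ∧
    |(∫ x : ℝ, (Complex.exp (Complex.I * (u : ℂ) * (x : ℂ)) - 1
            - Complex.I * (u : ℂ) * (x : ℂ)) ∂μ).im| ≤ 2 * (4 / h) ^ p * ∫ x : ℝ, |x| ^ p ∂μ := by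
  have fre : ∀ x : ℝ, (Complex.exp (Complex.I * (u : ℂ) * (x : ℂ)) - 1
            - Complex.I * (u : ℂ) * (x : ℂ)).re = Real.cos (u * x) - 1 := by
    intro x
    simp [Complex.exp_re]
  have fim : ∀ x : ℝ, (Complex.exp (Complex.I * (u : ℂ) * (x : ℂ)) - 1
            - Complex.I * (u : ℂ) * (x : ℂ)).im = Real.sin (u * x) - u * x := by
    intro x
    simp [Complex.exp_im]
  have hfi : Integrable (fun x : ℝ => Complex.exp (Complex.I * (u : ℂ) * (x : ℂ)) - 1
            - Complex.I * (u : ℂ) * (x : ℂ)) μ := by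
    refine (hμ_mom.const_mul (3 * u ^ 2)).mono' (by fun_prop) (Filter.Eventually.of_forall fun x => ?_)
    refine (Complex.norm_le_abs_re_add_abs_im _).trans ?_
    rw [fre, fim]
    have h1 := aux_sin (u * x) 2 (by norm_num) le_rfl
    have h1' : |u * x| ^ (2:ℝ) = (u * x) ^ 2 := by rw [Real.rpow_two, sq_abs]
    rw [h1'] at h1
    have h2 := Real.one_sub_sq_div_two_le_cos (x := u * x)
    have h4 := Real.cos_le_one (u * x)
    have h5 : |Real.cos (u * x) - 1| ≤ (u * x) ^ 2 / 2 := abs_le.mpr ⟨by linarith, by nlinarith⟩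
    nlinarith [sq_nonneg (u * x)]
  have ire := integral_re hfi
  have iim := integral_im hfi
  simp only [RCLike.re_to_complex, RCLike.im_to_complex] at ire iim
  have hci : Integrable (fun x : ℝ => Real.cos (u * x) - 1) μ := by
    have := hfi.re
    simpa only [RCLike.re_to_complex, fre] using this
  simp only [fre] at ire
  simp only [fim] at iim
  rw [← ire, ← iim]
  have hmS : MeasurableSet {x : ℝ | h < |x|} := measurableSet_lt (by fun_prop) (by fun_prop)
  have hfin : μ {x : ℝ | h < |x|} ≠ ⊤ := (ht.trans_lt ENNReal.ofReal_lt_top).ne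
  refine ⟨?_, ?_, ?_⟩
  · exact integral_nonpos fun x => by simpa using Real.cos_le_one (u * x)
  · rw [← integral_neg]
    have i1 : Integrable ((Set.Icc (-h) h).indicator (fun x : ℝ => 8 / h ^ 2 * x ^ 2)) μ :=
      (hμ_mom.const_mul _).indicator measurableSet_Icc
    have i2 : Integrable ({x : ℝ | h < |x|}.indicator (fun _ : ℝ => (2:ℝ))) μ := by
      rw [integrable_indicator_iff hmS]
      exact integrableOn_const hfin
    calc _ ≤ ∫ x, ((Set.Icc (-h) h).indicator (fun x : ℝ => 8 / h ^ 2 * x ^ 2) x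
          + {x : ℝ | h < |x|}.indicator (fun _ : ℝ => (2:ℝ)) x) ∂μ := by
          refine integral_mono hci.neg (i1.add i2) ?_
          intro x
          beta_reduce
          by_cases hx : h < |x|
          · rw [Set.indicator_of_notMem (show x ∉ Set.Icc (-h) h from fun hx' => absurd (abs_le.mpr hx') (not_le.mpr hx)),
              Set.indicator_of_mem (show x ∈ {x : ℝ | h < |x|} from hx)]
            linarith [Real.neg_one_le_cos (u * x)]
          · rw [Set.indicator_of_mem (show x ∈ Set.Icc (-h) h from abs_le.mp (not_lt.mp hx)),
              Set.indicator_of_notMem (show x ∉ {x : ℝ | h < |x|} from hx)]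
            have h2 := Real.one_sub_sq_div_two_le_cos (x := u * x)
            have h3 : u ^ 2 ≤ (4 / h) ^ 2 := by rw [← sq_abs u]; gcongr
            have h4 : u ^ 2 * x ^ 2 ≤ (4 / h) ^ 2 * x ^ 2 := by gcongr
            have h5 : (4 / h) ^ 2 * x ^ 2 = 2 * (8 / h ^ 2 * x ^ 2) := by ring
            nlinarith
      _ = 8 / h ^ 2 * (∫ x in Set.Icc (-h) h, x ^ 2 ∂μ) + 2 * μ.real {x : ℝ | h < |x|} := by
          rw [integral_add i1 i2, integral_indicator measurableSet_Icc, integral_indicator hmS,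
            integral_const_mul, setIntegral_const, smul_eq_mul]
          ring
      _ ≤ _ := by
          have : μ.real {x : ℝ | h < |x|} ≤ D := ENNReal.toReal_le_of_le_ofReal hD ht
          gcongr
  · rw [← integral_const_mul, ← Real.norm_eq_abs]
    refine norm_integral_le_of_norm_le (hpi.const_mul _) (Filter.Eventually.of_forall fun x => ?_)
    rw [Real.norm_eq_abs]
    refine (aux_sin (u * x) p hp1 hp2).trans ?_
    rw [abs_mul, Real.mul_rpow (abs_nonneg _) (abs_nonneg _), ← mul_assoc]
    gcongr

theorem near_threshold_probability_bound
    (μ : Measure ℝ)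
    (hμ_supp : μ (Set.Icc (-1 : ℝ) 1)ᶜ = 0)
    (hμ_mom : Integrable (fun x : ℝ => x ^ 2) μ)
    (α C : ℝ) (hα : α ∈ Set.Ioo (0 : ℝ) 2) (hC : 0 < C)
    (hμ_small : ∀ v ∈ Set.Ioc (0 : ℝ) 1,
      ∫ x in Set.Icc (-v) v, x ^ 2 ∂μ ≤ C * v ^ (2 - α))
    (ν : ℝ → Measure ℝ)
    (hν_prob : ∀ t : ℝ, 0 < t → IsProbabilityMeasure (ν t))
    (hν_char : ∀ t : ℝ, 0 < t → ∀ u : ℝ,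
      ∫ x : ℝ, Complex.exp (Complex.I * (u : ℂ) * (x : ℂ)) ∂(ν t) =
        Complex.exp ((t : ℂ) *
          ∫ x : ℝ, (Complex.exp (Complex.I * (u : ℂ) * (x : ℂ)) - 1
            - Complex.I * (u : ℂ) * (x : ℂ)) ∂μ))
    (β : ℝ) (hβ : β ∈ Set.Ioo (0 : ℝ) (1 / 2)) :
    ∃ C' > (0 : ℝ), ∃ t₀ ∈ Set.Ioc (0 : ℝ) 1, ∀ t ∈ Set.Ioc (0 : ℝ) t₀,
      ν t {x : ℝ | t ^ β / 2 < |x| ∧ |x| ≤ 2 * t ^ β} ≤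
        ENNReal.ofReal (C' * t ^ (1 - α * β)) := by
  obtain ⟨K, hK, htail⟩ := aux_tail μ hμ_supp hμ_mom α C hα hC hμ_small
  obtain ⟨hα0, hα2⟩ := hα
  obtain ⟨hβ0, hβ2⟩ := hβ
  set p := 1 + α / 2 with hp
  have hpi := aux_mom μ hμ_supp α K p hK (by linarith) (by linarith) htail
  set M := ∫ x : ℝ, |x| ^ p ∂μ with hM
  have hM0 : 0 ≤ M := integral_nonneg fun x => by positivity
  set E := 2 * 4 ^ p * M with hE
  refine ⟨2 * (8 * C + 2 * K + E ^ 2 / 2), by positivity, 1, by simp, ?_⟩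
  rintro t ⟨ht0, ht1⟩
  have := hν_prob t ht0
  set h := t ^ β with hh
  have hh0 : 0 < h := by positivity
  have hh1 : h ≤ 1 := Real.rpow_le_one ht0.le ht1 hβ0.le
  have e1 : t * h ^ (-α) = t ^ (1 - α * β) := by
    rw [hh, ← Real.rpow_mul ht0.le, sub_eq_add_neg, Real.rpow_add ht0, Real.rpow_one]
    congr 2; ring
  have e2 : t ^ 2 * (h ^ (-p)) ^ 2 ≤ t ^ (1 - α * β) := by
    have : t ^ 2 * (h ^ (-p)) ^ 2 = t ^ (2 - β * (2 + α)) := by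
      rw [hh, ← Real.rpow_mul ht0.le, ← Real.rpow_natCast (t ^ (β * -p)), ← Real.rpow_mul ht0.le,
        ← Real.rpow_natCast t, ← Real.rpow_add ht0]
      congr 1; rw [hp]; push_cast; ring
    rw [this]
    exact Real.rpow_le_rpow_of_exponent_ge ht0 ht1 (by nlinarith)
  have main := aux_trunc (ν t) (h / 2) ((8 * C + 2 * K + E ^ 2 / 2) * t ^ (1 - α * β)) (by positivity) (by
    intro u hu
    have hu' : |u| ≤ 4 / h := by
      refine hu.trans (le_of_eq ?_)
      field_simp; norm_num
    obtain ⟨a1, a2, a3⟩ := aux_psi μ hμ_mom p h (C * h ^ (2 - α)) (K * h ^ (-α)) u (by linarith)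
      (by linarith) hpi hh0 hu' (hμ_small h ⟨hh0, hh1⟩) (by positivity) (htail h hh0)
    have hc : charFun (ν t) u = Complex.exp ((t : ℂ) *
          ∫ x : ℝ, (Complex.exp (Complex.I * (u : ℂ) * (x : ℂ)) - 1
            - Complex.I * (u : ℂ) * (x : ℂ)) ∂μ) := by
      rw [← hν_char t ht0 u, charFun_apply_real]
      congr 1; ext x; congr 1; ring
    rw [hc]
    set z := ∫ x : ℝ, (Complex.exp (Complex.I * (u : ℂ) * (x : ℂ)) - 1
            - Complex.I * (u : ℂ) * (x : ℂ)) ∂μ with hz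
    have e3 : 8 / h ^ 2 * (C * h ^ (2 - α)) = 8 * C * h ^ (-α) := by
      rw [sub_eq_add_neg, Real.rpow_add hh0, Real.rpow_two]; field_simp
    have e4 : 2 * (4 / h) ^ p * M = E * h ^ (-p) := by
      rw [Real.div_rpow (by norm_num) hh0.le, Real.rpow_neg hh0.le, hE]; ring
    rw [e3] at a2
    rw [e4] at a3
    refine (aux_exp _ (t * (8 * C * h ^ (-α) + 2 * (K * h ^ (-α)))) (t * (E * h ^ (-p))) ?_ ?_ ?_).trans ?_
    · rw [Complex.re_ofReal_mul]; nlinarith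
    · rw [Complex.re_ofReal_mul]; nlinarith
    · rw [Complex.im_ofReal_mul, abs_mul, abs_of_pos ht0]; gcongr
    · have : E ^ 2 / 2 * (t ^ 2 * (h ^ (-p)) ^ 2) ≤ E ^ 2 / 2 * t ^ (1 - α * β) := by gcongr
      calc _ = (8 * C + 2 * K) * (t * h ^ (-α)) + E ^ 2 / 2 * (t ^ 2 * (h ^ (-p)) ^ 2) := by ring
        _ ≤ _ := by rw [e1]; linarith)
  calc _ ≤ ν t {x : ℝ | h / 2 < |x|} := measure_mono fun x hx => hx.1
    _ = ENNReal.ofReal ((ν t).real {x : ℝ | h / 2 < |x|}) := by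
        rw [ofReal_measureReal]
    _ ≤ _ := ENNReal.ofReal_le_ofReal (by linarith)
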